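/- Every strongly C-trivial Borel probability measure on 2^ℕ is strongly K-trivial. -/

import Mathlib

open MeasureTheory Filter

/-- Cantor space: the space of infinite binary sequences. -/
abbrev Cantor : Type := ℕ → Bool

/-- Finite binary strings. -/
abbrev BStr : Type := List Bool

/-- The cylinder set of sequences extending the string `x`. -/
def cyl (x : BStr) : Set Cantor := {Z | ∀ i : Fin x.length, Z i.1 = x.get i}

/-- The string of the first `n` bits of `Z`. -/
def seg (Z : Cantor) (n : ℕ) : BStr := List.ofFn fun i : Fin n => Z i.1

/-- `lam` is the uniform (fair-coin product) measure: every cylinder `[x]`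
has measure `2^{-|x|}`. -/
def IsUniform (lam : Measure Cantor) : Prop :=
  ∀ x : BStr, lam (cyl x) = (2 : ENNReal)⁻¹ ^ x.length

/-- `(G_m)` is a Martin-Löf test with respect to the measure `ρ`:
the sets `G_m` are uniformly effectively open and `ρ (G_m) ≤ 2^{-m}`. -/
def IsMLTest (ρ : Measure Cantor) (G : ℕ → Set Cantor) : Prop :=
  (∃ σ : ℕ → ℕ → BStr, Computable₂ σ ∧ ∀ m, G m = ⋃ i, cyl (σ m i)) ∧
  ∀ m, ρ (G m) ≤ (2 : ENNReal)⁻¹ ^ m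

/-- `μ` is Martin-Löf absolutely continuous in `ρ`: `inf_m μ(G_m) = 0`
for every `ρ`-Martin-Löf test `(G_m)`. -/
def MLAC (μ ρ : Measure Cantor) : Prop :=
  ∀ G : ℕ → Set Cantor, IsMLTest ρ G → ⨅ m, μ (G m) = 0

/-- `Z` is Martin-Löf random with respect to `lam`. -/
def MLRandom (lam : Measure Cantor) (Z : Cantor) : Prop :=
  ∀ G : ℕ → Set Cantor, IsMLTest lam G → Z ∉ ⋂ m, G m

/-- `ρ` is a computable measure: `ρ [x]` is a computable real, uniformly in `x`. -/
def ComputableMeasure (ρ : Measure Cantor) : Prop :=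
  ∃ q : BStr → ℕ → ℚ, Computable₂ q ∧
    ∀ x k, |(q x k : ℝ) - (ρ (cyl x)).toReal| ≤ (2 : ℝ)⁻¹ ^ k

/-- `U` is a universal plain machine. -/
def UniversalPlain (U : BStr →. BStr) : Prop :=
  Partrec U ∧ ∀ M : BStr →. BStr, Partrec M →
    ∃ c : ℕ, ∀ p x, x ∈ M p → ∃ q : BStr, q.length ≤ p.length + c ∧ x ∈ U q

/-- The domain of `M` is an antichain under the prefix relation. -/
def PrefixFreeDom (M : BStr →. BStr) : Prop :=
  ∀ p q : BStr, (M p).Dom → (M q).Dom → p <+: q → p = q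

/-- `U` is a universal prefix-free machine. -/
def UniversalPrefixFree (U : BStr →. BStr) : Prop :=
  Partrec U ∧ PrefixFreeDom U ∧
  ∀ M : BStr →. BStr, Partrec M → PrefixFreeDom M →
    ∃ c : ℕ, ∀ p x, x ∈ M p → ∃ q : BStr, q.length ≤ p.length + c ∧ x ∈ U q

/-- Kolmogorov complexity of the string `x` with respect to the machine `U`:
the minimal length of a `U`-description of `x`. -/
noncomputable def cpx (U : BStr →. BStr) (x : BStr) : ℕ :=
  sInf {n | ∃ q : BStr, q.length = n ∧ x ∈ U q}

/-- A natural number `n` identified with the string `0^n`. -/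
def numStr (n : ℕ) : BStr := List.replicate n false

/-- Complexity of the natural number `n` (i.e., of the string `0^n`). -/
noncomputable def cpxN (U : BStr →. BStr) (n : ℕ) : ℕ := cpx U (numStr n)

/-- The `μ`-average complexity of the strings of length `n`:
`Σ_{|x|=n} cpx(x) · μ[x]`. -/
noncomputable def avgCpx (U : BStr →. BStr) (μ : Measure Cantor) (n : ℕ) : ℝ :=
  ∑ v : Fin n → Bool, (cpx U (List.ofFn v) : ℝ) * (μ (cyl (List.ofFn v))).toReal

/-- A measure `μ` is trivial for the complexity given by the machine `U`
(e.g. K-trivial when `U` is the universal prefix-free machine, C-trivial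
when `U` is the universal plain machine). -/
def MeasTrivial (U : BStr →. BStr) (μ : Measure Cantor) : Prop :=
  ∃ c : ℝ, ∀ n : ℕ, avgCpx U μ n ≤ (cpxN U n : ℝ) + c

/-- `μ` is strongly trivial for the complexity notion given by the machine
`U`: `μ = Σ_s α_s δ_{A_s}` is a (finite or countable) convex combination of
Dirac measures on sequences `A_s` that are trivial via constants `b_s`
(`cpx(A_s↾n) ≤ cpx(n) + b_s` for all `n`) with `Σ_s α_s·b_s < ∞`. -/
def StronglyTrivial (U : BStr →. BStr) (μ : Measure Cantor) : Prop :=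
  ∃ (A : ℕ → Cantor) (α : ℕ → ENNReal) (b : ℕ → ℕ),
    (∑' s, α s) = 1 ∧
    μ = Measure.sum (fun s => α s • Measure.dirac (A s)) ∧
    (∀ s n, cpx U (seg (A s) n) ≤ cpxN U n + b s) ∧
    (∑' s, α s * (b s : ENNReal)) ≠ ⊤

/-!
If `A` is C-trivial via `b` and `i < 2 ^ n`, then `n + i` is computable from the `n`-bit binary
expansion of `i`, so `A↾(n + i)` has plain complexity at most `C(n + i) + b ≤ n + b + O(1)`. Thus,
for `L = b + O(1)`, each of the `2 ^ n` lengths `n + i` is attained by an extension of `A↾n` that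
has a program of length less than `n + L`. Programs for distinct pairs `(A↾n, i)` are distinct,
and there are fewer than `2 ^ (n + L)` of them, so at most `2 ^ L` strings have this property.
They can be enumerated from `n` and `L`, hence `A↾n` is computable from `n` and a string of length
`L` giving its index, whose self-delimiting code has length `2 * L + 1`. Therefore `K(A↾n) ≤ K(n)
+ 2 * b + O(1)`, and as this bound is affine in `b`, it keeps `∑ α_s * b_s` finite.
-/

section RecursivelyEnumerable

variable {α β : Type*} [Primcodable α] [Primcodable β]

theorem rePred_exists_of_primrecRel {P : α → ℕ → Prop} (hP : PrimrecRel P) :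
    REPred fun a => ∃ t, P a t := by
  classical
  have hfind : Partrec fun a => Nat.rfind fun t => Part.some (decide (P a t)) :=
    Partrec.rfind hP.decide.to_comp.partrec
  exact hfind.dom_re.of_eq fun a => Nat.rfind_dom'.trans (by simp)

theorem exists_monotone_primrecRel_of_rePred {p : α → Prop} (hp : REPred p) :
    ∃ P : α → ℕ → Prop, PrimrecRel P ∧ (∀ a, Monotone (P a)) ∧ ∀ a, p a ↔ ∃ t, P a t := by
  obtain ⟨c, hc⟩ := Nat.Partrec.Code.exists_code.1 hp
  refine ⟨fun a t => (c.evaln t (Encodable.encode a)).isSome, ?_, ?_, fun a => ?_⟩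
  · have hevaln : Primrec₂ fun (a : α) t => c.evaln t (Encodable.encode a) :=
      Nat.Partrec.Code.primrec_evaln.comp
        ((Primrec.snd.pair (Primrec.const c)).pair (Primrec.encode.comp Primrec.fst))
    exact Primrec.eq.comp (Primrec.option_isSome.comp hevaln) (Primrec.const true)
  · intro a s t hst hs
    obtain ⟨y, hy⟩ := Option.isSome_iff_exists.1 hs
    exact Option.isSome_iff_exists.2 ⟨y, Nat.Partrec.Code.evaln_mono hst hy⟩
  · have hdom : p a ↔ (c.eval (Encodable.encode a)).Dom := by simp [hc, Part.assert]
    simp only [hdom, Part.dom_iff_mem, Nat.Partrec.Code.evaln_complete,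
      Option.isSome_iff_exists, Option.mem_def]
    exact exists_comm

theorem rePred_and {p q : α → Prop} (hp : REPred p) (hq : REPred q) :
    REPred fun a => p a ∧ q a := by
  obtain ⟨P, hP, hPmono, hpP⟩ := exists_monotone_primrecRel_of_rePred hp
  obtain ⟨Q, hQ, hQmono, hqQ⟩ := exists_monotone_primrecRel_of_rePred hq
  have hPQ : PrimrecRel fun a t => P a t ∧ Q a t := PrimrecPred.and hP hQ
  refine (rePred_exists_of_primrecRel hPQ).of_eq fun a => ?_
  rw [hpP, hqQ]
  constructor
  · rintro ⟨t, hPt, hQt⟩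
    exact ⟨⟨t, hPt⟩, ⟨t, hQt⟩⟩
  · rintro ⟨⟨s, hs⟩, ⟨t, ht⟩⟩
    exact ⟨max s t, hPmono a (le_max_left s t) hs, hQmono a (le_max_right s t) ht⟩

theorem rePred_exists {p : α → β → Prop} (hp : REPred fun x : α × β => p x.1 x.2) :
    REPred fun a => ∃ b, p a b := by
  obtain ⟨P, hP, -, hpP⟩ := exists_monotone_primrecRel_of_rePred hp
  have hstage : PrimrecRel fun (a : α) t =>
      ∃ y ∈ (Encodable.decode (α := β × ℕ) t).toList, P (a, y.1) y.2 := by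
    refine (PrimrecRel.exists_mem_list (R := fun (y : β × ℕ) (a : α) => P (a, y.1) y.2)
      (hP.comp (Primrec.snd.pair (Primrec.fst.comp Primrec.fst))
        (Primrec.snd.comp Primrec.fst))).comp
      (Primrec.optionToList.comp (Primrec.decode.comp Primrec.snd)) Primrec.fst
  refine (rePred_exists_of_primrecRel hstage).of_eq fun a => ?_
  simp only [Option.mem_toList]
  constructor
  · rintro ⟨-, y, -, hy⟩
    exact ⟨y.1, (hpP (a, y.1)).2 ⟨y.2, hy⟩⟩
  · rintro ⟨b, hb⟩
    obtain ⟨t, ht⟩ := (hpP (a, b)).1 hb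
    exact ⟨Encodable.encode (b, t), (b, t), Encodable.encodek _, ht⟩

theorem rePred_forall_lt {p : α → ℕ → Prop} (hp : REPred fun x : α × ℕ => p x.1 x.2)
    {f : α → ℕ} (hf : Primrec f) : REPred fun a => ∀ i < f a, p a i := by
  obtain ⟨P, hP, hmono, hpP⟩ := exists_monotone_primrecRel_of_rePred hp
  have hstage : PrimrecRel fun a t => ∀ i ∈ List.range (f a), P (a, i) t := by
    refine (PrimrecRel.forall_mem_list (R := fun i (x : α × ℕ) => P (x.1, i) x.2)
      (hP.comp ((Primrec.fst.comp Primrec.snd).pair Primrec.fst)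
        (Primrec.snd.comp Primrec.snd))).comp
      (Primrec.list_range.comp (hf.comp Primrec.fst)) Primrec.id
  refine (rePred_exists_of_primrecRel hstage).of_eq fun a => ?_
  simp only [List.mem_range]
  constructor
  · rintro ⟨t, ht⟩ i hi
    exact (hpP (a, i)).2 ⟨t, ht i hi⟩
  · intro h
    choose! t ht using fun i hi => (hpP (a, i)).1 (h i hi)
    exact ⟨(Finset.range (f a)).sup t, fun i hi =>
      hmono _ (Finset.le_sup (Finset.mem_range.2 hi)) (ht i hi)⟩

theorem rePred_mem_of_partrec {f : α →. β} (hf : Partrec f) :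
    REPred fun x : α × β => x.2 ∈ f x.1 := by
  have heq : REPred fun z : (α × β) × β => z.2 = z.1.2 :=
    (Primrec.eq.comp Primrec.snd (Primrec.snd.comp Primrec.fst)).computablePred.to_re
  have hgraph := Partrec.bind (hf.comp Computable.fst)
    (g := fun (x : α × β) y => Part.assert (y = x.2) fun _ => Part.some ()) heq
  refine hgraph.dom_re.of_eq fun x => ?_
  simp [Part.dom_iff_mem]

end RecursivelyEnumerable

section Enumeration

/-- The distinct values among `e 0, …, e (t - 1)`, listed backwards: as `t` grows, new values are
added at the head. -/
def distinctValues {β : Type*} [DecidableEq β] (e : ℕ → Option β) (t : ℕ) : List β :=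
  ((List.range t).filterMap e).reverse.dedup

theorem mem_distinctValues {β : Type*} [DecidableEq β] {e : ℕ → Option β} {t : ℕ} {b : β} :
    b ∈ distinctValues e t ↔ ∃ s < t, e s = some b := by
  simp [distinctValues]

theorem distinctValues_suffix {β : Type*} [DecidableEq β] (e : ℕ → Option β) {s t : ℕ}
    (hst : s ≤ t) : distinctValues e s <:+ distinctValues e t := by
  obtain ⟨k, rfl⟩ := Nat.exists_eq_add_of_le hst
  simp only [distinctValues, List.range_add, List.filterMap_append, List.reverse_append,
    List.dedup_append]
  exact List.suffix_union_right _ _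

theorem length_distinctValues_le {β : Type*} [DecidableEq β] {e : ℕ → Option β} {N : ℕ}
    (hN : {b | ∃ t, e t = some b}.encard ≤ N) (t : ℕ) : (distinctValues e t).length ≤ N := by
  have hsub : ((distinctValues e t).toFinset : Set β) ⊆ {b | ∃ t, e t = some b} := fun b hb => by
    obtain ⟨s, -, hs⟩ := mem_distinctValues.1 (List.mem_toFinset.1 hb)
    exact ⟨s, hs⟩
  have hcard : (distinctValues e t).toFinset.card = (distinctValues e t).length :=
    List.toFinset_card_of_nodup (List.nodup_dedup _)
  have hle := (Set.encard_le_encard hsub).trans hN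
  rwa [Set.encard_coe_eq_coe_finsetCard, hcard, Nat.cast_le] at hle

variable {α β : Type*} [Primcodable α] [Primcodable β]

theorem primrec_list_dedup [DecidableEq α] : Primrec (List.dedup : List α → List α) := by
  have hmem : PrimrecRel fun (a : α) (l : List α) => a ∈ l :=
    (Primrec.eq.exists_mem_list.comp Primrec.snd Primrec.fst).of_eq fun x => by simp
  refine (Primrec.list_foldr (h := fun _ (x : α × List α) => if x.1 ∈ x.2 then x.2 else x.1 :: x.2)
    Primrec.id (Primrec.const []) ?_).of_eq fun l => ?_
  · have hx := Primrec.snd (α := List α) (β := α × List α)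
    exact Primrec.ite (hmem.comp (Primrec.fst.comp hx) (Primrec.snd.comp hx))
      (Primrec.snd.comp hx) (Primrec.list_cons.comp (Primrec.fst.comp hx) (Primrec.snd.comp hx))
  · induction l with
    | nil => rfl
    | cons a l ih => rw [List.dedup_cons', id_eq, List.foldr_cons, ← ih, id_eq]

theorem primrec_distinctValues [DecidableEq β] {e : α → ℕ → Option β} (he : Primrec₂ e) :
    Primrec₂ fun a t => distinctValues (e a) t :=
  primrec_list_dedup.comp (Primrec.list_reverse.comp
    (Primrec.listFilterMap (Primrec.list_range.comp Primrec.snd)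
      (he.comp (Primrec.fst.comp Primrec.fst) Primrec.snd)))

theorem exists_partrec_enumeration_of_primrec {e : α → ℕ → Option β} (he : Primrec₂ e) :
    ∃ f : α → ℕ →. β, Partrec₂ f ∧ ∀ a (N : ℕ), {b | ∃ t, e a t = some b}.encard ≤ N →
      ∀ b t, e a t = some b → ∃ i < N, b ∈ f a i := by
  classical
  refine ⟨fun a i => Nat.rfindOpt fun t => (distinctValues (e a) t).reverse[i]?, ?_, ?_⟩
  · refine Partrec.rfindOpt (Primrec.list_getElem?.comp (Primrec.list_reverse.comp ?_)
      (Primrec.snd.comp Primrec.fst)).to_comp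
    exact (primrec_distinctValues he).comp (Primrec.fst.comp Primrec.fst) Primrec.snd
  · intro a N hN b t hb
    have hmem : b ∈ (distinctValues (e a) (t + 1)).reverse :=
      List.mem_reverse.2 (mem_distinctValues.2 ⟨t, t.lt_succ_self, hb⟩)
    obtain ⟨i, hi, hib⟩ := List.getElem_of_mem hmem
    have hmono {y s t} (hst : s ≤ t) (hy : y ∈ (distinctValues (e a) s).reverse[i]?) :
        y ∈ (distinctValues (e a) t).reverse[i]? := by
      obtain ⟨hi, rfl⟩ := List.getElem?_eq_some_iff.1 hy
      exact List.prefix_iff_getElem?.1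
        (List.reverse_prefix.2 (distinctValues_suffix (e a) hst)) i hi
    refine ⟨i, ?_, (Nat.rfindOpt_mono hmono).2 ⟨t + 1, List.getElem?_eq_some_iff.2 ⟨hi, hib⟩⟩⟩
    rw [List.length_reverse] at hi
    exact hi.trans_le (length_distinctValues_le hN _)

theorem exists_partrec_enumeration {R : α → β → Prop} (hR : REPred fun x : α × β => R x.1 x.2) :
    ∃ f : α → ℕ →. β, Partrec₂ f ∧ ∀ a (N : ℕ), {b | R a b}.encard ≤ N →
      ∀ b, R a b → ∃ i < N, b ∈ f a i := by
  classical
  obtain ⟨P, hP, -, hRP⟩ := exists_monotone_primrecRel_of_rePred hR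
  let e (a : α) (t : ℕ) : Option β :=
    (Encodable.decode (α := β × ℕ) t).bind fun y => if P (a, y.1) y.2 then some y.1 else none
  have he : Primrec₂ e := by
    have hy : Primrec fun x : (α × ℕ) × (β × ℕ) => x.2.1 := Primrec.fst.comp Primrec.snd
    refine Primrec.option_bind (Primrec.decode.comp Primrec.snd) (Primrec.ite ?_
      (Primrec.option_some.comp hy) (Primrec.const none))
    exact hP.comp ((Primrec.fst.comp Primrec.fst).pair hy) (Primrec.snd.comp Primrec.snd)
  have hRe (a : α) (b : β) : R a b ↔ ∃ t, e a t = some b := by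
    rw [hRP (a, b)]
    constructor
    · rintro ⟨t, ht⟩
      exact ⟨Encodable.encode (b, t), by simp [e, ht]⟩
    · rintro ⟨t, ht⟩
      obtain ⟨y, -, hy⟩ := Option.bind_eq_some_iff.1 ht
      obtain ⟨hPy, rfl⟩ := Option.ite_none_right_eq_some.1 hy |>.imp_right Option.some.inj
      exact ⟨y.2, hPy⟩
  obtain ⟨f, hf, hfe⟩ := exists_partrec_enumeration_of_primrec he
  refine ⟨f, hf, fun a N hN b hb => ?_⟩
  simp only [hRe] at hN hb
  obtain ⟨t, ht⟩ := hb
  exact hfe a N hN b t ht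

end Enumeration

section BinaryStrings

/-- The natural number with binary digits `l`, least significant digit first; leading zeros are
allowed. -/
def binValue (l : BStr) : ℕ := Nat.ofDigits 2 (l.map Bool.toNat)

theorem primrec_binValue : Primrec binValue := by
  have htoNat : Primrec Bool.toNat := Primrec.dom_finite _
  have hstep : Primrec₂ fun (_ : BStr) (x : Bool × ℕ) => x.1.toNat + 2 * x.2 :=
    Primrec.nat_add.comp (htoNat.comp (Primrec.fst.comp Primrec.snd))
      (Primrec.nat_mul.comp (Primrec.const 2) (Primrec.snd.comp Primrec.snd))
  exact (Primrec.list_foldr Primrec.id (Primrec.const 0) hstep).of_eq fun l => by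
    simp [binValue, Nat.ofDigits_eq_foldr, List.foldr_map]

theorem exists_binValue_eq {k i : ℕ} (hi : i < 2 ^ k) : ∃ l, l.length = k ∧ binValue l = i := by
  induction k generalizing i with
  | zero => exact ⟨[], rfl, (Nat.lt_one_iff.1 hi).symm⟩
  | succ k ih =>
    obtain ⟨l, hl, hli⟩ := ih (i := i / 2) (by omega)
    refine ⟨i.bodd :: l, by rw [List.length_cons, hl], ?_⟩
    calc binValue (i.bodd :: l) = i.bodd.toNat + 2 * binValue l := Nat.ofDigits_cons ..
      _ = i := by rw [hli, ← Nat.div2_val, Nat.bodd_add_div2]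

theorem lt_two_of_mem_map_toNat {l : BStr} {d : ℕ} (hd : d ∈ l.map Bool.toNat) : d < 2 := by
  obtain ⟨b, -, rfl⟩ := List.mem_map.1 hd
  exact b.toNat_lt

theorem binValue_lt (l : BStr) : binValue l < 2 ^ l.length := by
  rw [← List.length_map Bool.toNat]
  exact Nat.ofDigits_lt_base_pow_length one_lt_two fun _ => lt_two_of_mem_map_toNat

theorem binValue_concat_true_injective : Function.Injective fun l => binValue (l ++ [true]) := by
  have hdigits (l : BStr) :
      Nat.digits 2 (binValue (l ++ [true])) = (l ++ [true]).map Bool.toNat :=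
    Nat.digits_ofDigits 2 one_lt_two _ (fun _ => lt_two_of_mem_map_toNat) (by simp)
  have htoNat : Function.Injective Bool.toNat := by decide
  intro l l' hll'
  have hmap := (hdigits l).symm.trans ((congrArg (Nat.digits 2) hll').trans (hdigits l'))
  exact List.append_cancel_right (List.map_injective_iff.2 htoNat hmap)

theorem encard_length_lt_le (m : ℕ) : {l : BStr | l.length < m}.encard ≤ 2 ^ m := by
  have hmaps : Set.MapsTo (fun l => binValue (l ++ [true])) {l | l.length < m}
      (Finset.range (2 ^ m)) := fun l hl => by
    have hlen : (l ++ [true]).length ≤ m := by simpa using hl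
    exact Finset.mem_coe.2 <| Finset.mem_range.2 <|
      (binValue_lt _).trans_le (Nat.pow_le_pow_right two_pos hlen)
  have hle := Set.encard_le_encard_of_injOn hmaps binValue_concat_true_injective.injOn
  rwa [Set.encard_coe_eq_coe_finsetCard, Finset.card_range, Nat.cast_pow] at hle

end BinaryStrings

section SelfDelimiting

/-- The self-delimiting code `1^|l| 0 l` of the string `l`. -/
def selfDelim (l : BStr) : BStr := List.replicate l.length true ++ false :: l

/-- The partial inverse of `fun (l, p) => selfDelim l ++ p`. -/
def splitSelfDelim (r : BStr) : Option (BStr × BStr) :=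
  let k := r.findIdx (!·)
  if 2 * k + 1 ≤ r.length then some ((r.drop (k + 1)).take k, r.drop (2 * k + 1)) else none

theorem length_selfDelim (l : BStr) : (selfDelim l).length = 2 * l.length + 1 := by
  simp only [selfDelim, List.length_append, List.length_replicate, List.length_cons]
  omega

theorem findIdx_selfDelim_append (l p : BStr) : (selfDelim l ++ p).findIdx (!·) = l.length := by
  have hall : (List.replicate l.length true).findIdx (!·) = l.length := by
    simpa using List.findIdx_eq_length_of_false (p := (!·)) (xs := List.replicate l.length true)
      (by simp)
  simp [selfDelim, List.findIdx_append, List.findIdx_cons, hall]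

theorem splitSelfDelim_eq_some_iff {r l p : BStr} :
    splitSelfDelim r = some (l, p) ↔ r = selfDelim l ++ p := by
  constructor
  · intro h
    obtain ⟨hlen, h⟩ := Option.ite_none_right_eq_some.1 h
    obtain ⟨rfl, rfl⟩ := Prod.mk.inj (Option.some.inj h)
    set k := r.findIdx (!·)
    have hkr : k < r.length := by omega
    have hbit : r[k] = false := by simpa using List.findIdx_getElem (w := hkr)
    have hones : r.take k = List.replicate k true := by
      refine List.eq_replicate_iff.2 ⟨List.length_take_of_le hkr.le, fun b hb => ?_⟩
      simpa using List.false_of_mem_take_findIdx hb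
    have htail : r.drop (k + 1) = (r.drop (k + 1)).take k ++ r.drop (2 * k + 1) := by
      have hsplit := (List.take_append_drop k (r.drop (k + 1))).symm
      rwa [List.drop_drop, show k + 1 + k = 2 * k + 1 by ring] at hsplit
    have htake : ((r.drop (k + 1)).take k).length = k := by
      rw [List.length_take, List.length_drop]
      omega
    calc r = r.take k ++ r[k] :: r.drop (k + 1) := by simp
      _ = List.replicate k true ++ false :: ((r.drop (k + 1)).take k ++ r.drop (2 * k + 1)) := by
        rw [hones, hbit, ← htail]
      _ = selfDelim ((r.drop (k + 1)).take k) ++ r.drop (2 * k + 1) := by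
        simp [selfDelim, htake]
  · rintro rfl
    have hlen : 2 * l.length + 1 ≤ (selfDelim l ++ p).length := by
      rw [List.length_append, length_selfDelim]
      exact Nat.le_add_right _ _
    have htail : (selfDelim l ++ p).drop (l.length + 1) = l ++ p := by
      simp [selfDelim, ← List.drop_drop]
    have hp : (selfDelim l ++ p).drop (2 * l.length + 1) = p :=
      List.drop_left' (length_selfDelim l)
    simp only [splitSelfDelim, findIdx_selfDelim_append, if_pos hlen, htail, hp, List.take_left']

theorem selfDelim_append_inj {l l' p p' : BStr} (h : selfDelim l ++ p = selfDelim l' ++ p') :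
    l = l' ∧ p = p' :=
  Prod.mk.inj <| Option.some.inj <|
    (splitSelfDelim_eq_some_iff.2 rfl).symm.trans (splitSelfDelim_eq_some_iff.2 h)

theorem primrec_splitSelfDelim : Primrec splitSelfDelim := by
  have hk : Primrec fun r : BStr => r.findIdx (!·) :=
    Primrec.list_findIdx Primrec.id (Primrec.not.comp Primrec.snd).to₂
  have hm : Primrec fun r : BStr => 2 * r.findIdx (!·) + 1 :=
    Primrec.succ.comp (Primrec.nat_mul.comp (Primrec.const 2) hk)
  refine Primrec.ite (Primrec.nat_le.comp hm Primrec.list_length) ?_ (Primrec.const none)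
  exact Primrec.option_some.comp ((Primrec.list_take.comp hk
    (Primrec.list_drop.comp (Primrec.succ.comp hk) Primrec.id)).pair
      (Primrec.list_drop.comp hm Primrec.id))

/-- The machine that reads a description of the form `selfDelim l ++ p` and applies `g` to `l` and
to the output of the machine `N` on `p`. -/
def prefixedMachine (N : BStr →. BStr) (g : BStr → BStr →. BStr) : BStr →. BStr := fun r =>
  (splitSelfDelim r : Part (BStr × BStr)).bind fun lp => (N lp.2).bind (g lp.1)

theorem partrec_prefixedMachine {N : BStr →. BStr} {g : BStr → BStr →. BStr} (hN : Partrec N)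
    (hg : Partrec₂ g) : Partrec (prefixedMachine N g) := by
  refine primrec_splitSelfDelim.to_comp.ofOption.bind (Partrec.bind
    (hN.comp (Computable.snd.comp Computable.snd)) ?_)
  exact hg.comp (Computable.fst.comp (Computable.snd.comp Computable.fst)) Computable.snd

theorem mem_prefixedMachine {N : BStr →. BStr} {g : BStr → BStr →. BStr} {r x : BStr} :
    x ∈ prefixedMachine N g r ↔ ∃ l p y, r = selfDelim l ++ p ∧ y ∈ N p ∧ x ∈ g l y := by
  constructor
  · intro hx
    obtain ⟨⟨l, p⟩, hlp, hx⟩ := Part.mem_bind_iff.1 hx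
    obtain ⟨y, hy, hxy⟩ := Part.mem_bind_iff.1 hx
    exact ⟨l, p, y, splitSelfDelim_eq_some_iff.1 (Part.mem_coe.1 hlp), hy, hxy⟩
  · rintro ⟨l, p, y, hr, hy, hxy⟩
    exact Part.mem_bind (Part.mem_coe.2 (splitSelfDelim_eq_some_iff.2 hr)) (Part.mem_bind hy hxy)

theorem prefixFreeDom_prefixedMachine {N : BStr →. BStr} (hN : PrefixFreeDom N)
    (g : BStr → BStr →. BStr) : PrefixFreeDom (prefixedMachine N g) := by
  rintro r r' hr hr' ⟨w, hw⟩
  obtain ⟨l, p, y, rfl, hy, -⟩ := mem_prefixedMachine.1 (Part.get_mem hr)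
  obtain ⟨l', p', y', rfl, hy', -⟩ := mem_prefixedMachine.1 (Part.get_mem hr')
  rw [List.append_assoc] at hw
  obtain ⟨rfl, rfl⟩ := selfDelim_append_inj hw
  have hpw : p = p ++ w := hN p (p ++ w) (Part.dom_iff_mem.2 ⟨y, hy⟩)
    (Part.dom_iff_mem.2 ⟨y', hy'⟩) (List.prefix_append p w)
  exact congrArg (selfDelim l ++ ·) hpw

end SelfDelimiting

section Complexity

variable {U : BStr →. BStr}

theorem cpx_le_length {q x : BStr} (hx : x ∈ U q) : cpx U x ≤ q.length :=
  Nat.sInf_le ⟨q, rfl, hx⟩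

theorem exists_length_eq_cpx {q x : BStr} (hx : x ∈ U q) :
    ∃ q' : BStr, q'.length = cpx U x ∧ x ∈ U q' :=
  Nat.sInf_mem (s := {n | ∃ q' : BStr, q'.length = n ∧ x ∈ U q'}) ⟨q.length, q, rfl, hx⟩

theorem primrec_numStr : Primrec numStr :=
  (Primrec.list_map Primrec.list_range (Primrec.const false).to₂).of_eq fun n => by
    simp [numStr]

theorem UniversalPlain.exists_description (hU : UniversalPlain U) (x : BStr) : ∃ q, x ∈ U q := by
  obtain ⟨c, hc⟩ := hU.2 (fun p => Part.some p) Computable.id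
  obtain ⟨q, -, hq⟩ := hc x x (Part.mem_some x)
  exact ⟨q, hq⟩

theorem UniversalPlain.exists_cpx_le (hU : UniversalPlain U) {f : BStr → BStr}
    (hf : Computable f) : ∃ c, ∀ p, cpx U (f p) ≤ p.length + c := by
  obtain ⟨c, hc⟩ := hU.2 (fun p => Part.some (f p)) hf
  refine ⟨c, fun p => ?_⟩
  obtain ⟨q, hq, hqU⟩ := hc p (f p) (Part.mem_some (f p))
  exact (cpx_le_length hqU).trans hq

theorem UniversalPlain.exists_cpxN_add_le (hU : UniversalPlain U) :
    ∃ c, ∀ n i, i < 2 ^ n → cpxN U (n + i) ≤ n + c := by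
  have hf : Primrec fun p : BStr => numStr (p.length + binValue p) :=
    primrec_numStr.comp (Primrec.nat_add.comp Primrec.list_length primrec_binValue)
  obtain ⟨c, hc⟩ := hU.exists_cpx_le hf.to_comp
  refine ⟨c, fun n i hi => ?_⟩
  obtain ⟨p, rfl, rfl⟩ := exists_binValue_eq hi
  exact hc p

theorem UniversalPrefixFree.exists_description (hU : UniversalPrefixFree U) (x : BStr) :
    ∃ q, x ∈ U q := by
  let N : BStr →. BStr := fun p => (if p = [] then some p else none : Option BStr)
  have hN : Partrec N := (Primrec.ite (Primrec.eq.comp Primrec.id (Primrec.const []))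
    Primrec.option_some (Primrec.const none)).to_comp.ofOption
  have hN_nil {p : BStr} (hp : (N p).Dom) : p = [] := by
    by_contra hne
    simp [N, hne] at hp
  have hN_dom : PrefixFreeDom N := fun p q hp hq _ => (hN_nil hp).trans (hN_nil hq).symm
  have hM : Partrec (prefixedMachine N fun l _ => Part.some l) :=
    partrec_prefixedMachine hN Computable.fst
  obtain ⟨c, hc⟩ := hU.2.2 _ hM (prefixFreeDom_prefixedMachine hN_dom _)
  obtain ⟨q, -, hq⟩ := hc (selfDelim x) x (mem_prefixedMachine.2
    ⟨x, [], [], (List.append_nil _).symm, Part.mem_some [], Part.mem_some x⟩)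
  exact ⟨q, hq⟩

theorem UniversalPrefixFree.exists_cpx_le (hU : UniversalPrefixFree U)
    {g : BStr → BStr →. BStr} (hg : Partrec₂ g) :
    ∃ c, ∀ l y x, x ∈ g l y → cpx U x ≤ cpx U y + 2 * l.length + c := by
  obtain ⟨c, hc⟩ := hU.2.2 _ (partrec_prefixedMachine hU.1 hg)
    (prefixFreeDom_prefixedMachine hU.2.1 g)
  refine ⟨c + 1, fun l y x hx => ?_⟩
  obtain ⟨_, hy⟩ := hU.exists_description y
  obtain ⟨p, hp, hpy⟩ := exists_length_eq_cpx hy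
  obtain ⟨q, hq, hqx⟩ := hc (selfDelim l ++ p) x (mem_prefixedMachine.2 ⟨l, p, y, rfl, hpy, hx⟩)
  calc cpx U x ≤ q.length := cpx_le_length hqx
    _ ≤ (selfDelim l ++ p).length + c := hq
    _ = cpx U y + 2 * l.length + (c + 1) := by
      rw [List.length_append, length_selfDelim, hp]
      ring

end Complexity

section Triviality

/-- Each of the `2 ^ n` lengths from `n` to `n + 2 ^ n - 1` is the length of an extension of `x`
that has a `U`-description shorter than `n + L`; here `n` stands for the length of `x`. -/
def HasSimpleExtensions (U : BStr →. BStr) (n L : ℕ) (x : BStr) : Prop :=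
  ∀ i < 2 ^ n, ∃ q y, y ∈ U q ∧ q.length < n + L ∧ y.length = n + i ∧ y.take n = x

theorem primrec_two_pow : Primrec fun n : ℕ => 2 ^ n := by
  have hstep : Primrec₂ fun (_ m : ℕ) => 2 * m :=
    Primrec.nat_mul.comp (Primrec.const 2) Primrec.snd
  refine (Primrec.nat_rec₁ 1 hstep).of_eq fun n => ?_
  induction n with
  | zero => rfl
  | succ n ih => rw [pow_succ', ← ih]

theorem rePred_exists_extension {α : Type*} [Primcodable α] {U : BStr →. BStr} (hU : Partrec U)
    {n k m : α → ℕ} {x : α → BStr} (hn : Primrec n) (hk : Primrec k) (hm : Primrec m)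
    (hx : Primrec x) : REPred fun a =>
      ∃ q y, y ∈ U q ∧ q.length < k a ∧ y.length = m a ∧ y.take (n a) = x a := by
  have ha : Primrec fun w : (α × BStr) × BStr => w.1.1 := Primrec.fst.comp Primrec.fst
  have hq : Primrec fun w : (α × BStr) × BStr => w.1.2 := Primrec.snd.comp Primrec.fst
  have hy : Primrec fun w : (α × BStr) × BStr => w.2 := Primrec.snd
  have hmem : REPred fun w : (α × BStr) × BStr => w.2 ∈ U w.1.2 :=
    rePred_mem_of_partrec (hU.comp Computable.snd)
  have hshort : PrimrecPred fun w : (α × BStr) × BStr => w.1.2.length < k w.1.1 :=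
    Primrec.nat_lt.comp (Primrec.list_length.comp hq) (hk.comp ha)
  have hlength : PrimrecPred fun w : (α × BStr) × BStr => w.2.length = m w.1.1 :=
    Primrec.eq.comp (Primrec.list_length.comp hy) (hm.comp ha)
  have htake : PrimrecPred fun w : (α × BStr) × BStr => w.2.take (n w.1.1) = x w.1.1 :=
    Primrec.eq.comp (Primrec.list_take.comp (hn.comp ha) hy) (hx.comp ha)
  exact rePred_exists (rePred_exists
    (rePred_and hmem (hshort.and (hlength.and htake)).computablePred.to_re))

theorem rePred_hasSimpleExtensions {U : BStr →. BStr} (hU : Partrec U) :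
    REPred fun z : (ℕ × ℕ) × BStr => HasSimpleExtensions U z.1.1 z.1.2 z.2 := by
  have hz : Primrec fun w : ((ℕ × ℕ) × BStr) × ℕ => w.1 := Primrec.fst
  have hn : Primrec fun w : ((ℕ × ℕ) × BStr) × ℕ => w.1.1.1 :=
    Primrec.fst.comp (Primrec.fst.comp hz)
  have hL : Primrec fun w : ((ℕ × ℕ) × BStr) × ℕ => w.1.1.2 :=
    Primrec.snd.comp (Primrec.fst.comp hz)
  have hext : REPred fun w : ((ℕ × ℕ) × BStr) × ℕ => ∃ q y, y ∈ U q ∧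
      q.length < w.1.1.1 + w.1.1.2 ∧ y.length = w.1.1.1 + w.2 ∧ y.take w.1.1.1 = w.1.2 :=
    rePred_exists_extension hU hn (Primrec.nat_add.comp hn hL)
      (Primrec.nat_add.comp hn Primrec.snd) (Primrec.snd.comp hz)
  have hpow : Primrec fun z : (ℕ × ℕ) × BStr => 2 ^ z.1.1 :=
    primrec_two_pow.comp (Primrec.fst.comp Primrec.fst)
  exact rePred_forall_lt hext hpow

theorem encard_hasSimpleExtensions_le (U : BStr →. BStr) (n L : ℕ) :
    {x | HasSimpleExtensions U n L x}.encard ≤ 2 ^ L := by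
  let S := {x | HasSimpleExtensions U n L x}
  choose! q y hyq hq hylen hytake using
    fun (z : BStr × ℕ) (hz : z ∈ S ×ˢ (Finset.range (2 ^ n) : Set ℕ)) =>
      hz.1 z.2 (Finset.mem_range.1 (Finset.mem_coe.1 hz.2))
  have hinj : Set.InjOn q (S ×ˢ (Finset.range (2 ^ n) : Set ℕ)) := fun z hz z' hz' hqq => by
    have hyy : y z = y z' := Part.mem_unique (hqq ▸ hyq z hz) (hyq z' hz')
    refine Prod.ext ?_ ?_
    · rw [← hytake z hz, ← hytake z' hz', hyy]
    · have hlen := hylen z hz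
      rw [hyy, hylen z' hz'] at hlen
      exact (Nat.add_left_cancel hlen).symm
  have hle : S.encard * (2 ^ n : ℕ) ≤ 2 ^ L * (2 ^ n : ℕ) := by
    calc S.encard * (2 ^ n : ℕ) = (S ×ˢ (Finset.range (2 ^ n) : Set ℕ)).encard := by
          rw [Set.encard_prod, Set.encard_coe_eq_coe_finsetCard, Finset.card_range]
      _ ≤ {p : BStr | p.length < n + L}.encard := Set.encard_le_encard_of_injOn hq hinj
      _ ≤ 2 ^ (n + L) := encard_length_lt_le (n + L)
      _ = 2 ^ L * (2 ^ n : ℕ) := by rw [add_comm, pow_add, Nat.cast_pow, Nat.cast_ofNat]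
  exact (ENat.mul_le_mul_right_iff (by simp) (ENat.natCast_ne_top (2 ^ n))).1 hle

/-- `A` is trivial via the constant `b` for the complexity given by `U`: C-trivial via `b` when `U`
is a universal plain machine, K-trivial via `b` when it is a universal prefix-free one. -/
def TrivialVia (U : BStr →. BStr) (A : Cantor) (b : ℕ) : Prop :=
  ∀ n, cpx U (seg A n) ≤ cpxN U n + b

variable {U UK : BStr →. BStr}

theorem length_seg (A : Cantor) (n : ℕ) : (seg A n).length = n := List.length_ofFn

theorem take_seg (A : Cantor) {n m : ℕ} (hnm : n ≤ m) : (seg A m).take n = seg A n := by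
  refine List.ext_getElem (by simp [seg, hnm]) fun i _ _ => by simp [seg]

theorem UniversalPlain.exists_hasSimpleExtensions (hU : UniversalPlain U) :
    ∃ c, ∀ A b, TrivialVia U A b → ∀ n, HasSimpleExtensions U n (b + c) (seg A n) := by
  obtain ⟨c, hc⟩ := hU.exists_cpxN_add_le
  refine ⟨c + 1, fun A b hA n i hi => ?_⟩
  obtain ⟨_, hdesc⟩ := hU.exists_description (seg A (n + i))
  obtain ⟨q, hq, hqU⟩ := exists_length_eq_cpx hdesc
  refine ⟨q, seg A (n + i), hqU, ?_, length_seg A (n + i), take_seg A (n.le_add_right i)⟩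
  calc q.length = cpx U (seg A (n + i)) := hq
    _ ≤ cpxN U (n + i) + b := hA (n + i)
    _ ≤ n + c + b := Nat.add_le_add_right (hc n i hi) b
    _ < n + (b + (c + 1)) := by omega

theorem exists_cpx_le_of_hasSimpleExtensions (hU : Partrec U) (hUK : UniversalPrefixFree UK) :
    ∃ c, ∀ n L x, HasSimpleExtensions U n L x → cpx UK x ≤ cpxN UK n + 2 * L + c := by
  obtain ⟨f, hf, hfe⟩ := exists_partrec_enumeration
    (R := fun a : ℕ × ℕ => HasSimpleExtensions U a.1 a.2) (rePred_hasSimpleExtensions hU)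
  have hg : Partrec₂ fun l y : BStr => f (y.length, l.length) (binValue l) :=
    hf.comp ((Primrec.list_length.comp Primrec.snd).pair
      (Primrec.list_length.comp Primrec.fst)).to_comp (primrec_binValue.comp Primrec.fst).to_comp
  obtain ⟨c, hc⟩ := hUK.exists_cpx_le hg
  refine ⟨c, fun n L x hx => ?_⟩
  obtain ⟨i, hi, hxi⟩ := hfe (n, L) (2 ^ L) (mod_cast encard_hasSimpleExtensions_le U n L) x hx
  obtain ⟨l, rfl, rfl⟩ := exists_binValue_eq hi
  refine hc l (numStr n) x ?_
  rwa [numStr, List.length_replicate]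

theorem exists_trivialVia_prefixFree (hU : UniversalPlain U) (hUK : UniversalPrefixFree UK) :
    ∃ d, ∀ A b, TrivialVia U A b → TrivialVia UK A (2 * b + d) := by
  obtain ⟨c, hc⟩ := hU.exists_hasSimpleExtensions
  obtain ⟨c', hc'⟩ := exists_cpx_le_of_hasSimpleExtensions hU.1 hUK
  refine ⟨2 * c + c', fun A b hA n => ?_⟩
  calc cpx UK (seg A n) ≤ cpxN UK n + 2 * (b + c) + c' := hc' n (b + c) _ (hc A b hA n)
    _ = cpxN UK n + (2 * b + (2 * c + c')) := by ring

theorem StronglyTrivial.of_affine {V : BStr →. BStr} {μ : Measure Cantor} {k d : ℕ}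
    (hμ : StronglyTrivial U μ) (h : ∀ A b, TrivialVia U A b → TrivialVia V A (k * b + d)) :
    StronglyTrivial V μ := by
  obtain ⟨A, α, b, hα, hsum, hA, hb⟩ := hμ
  refine ⟨A, α, fun s => k * b s + d, hα, hsum, fun s => h (A s) (b s) (hA s), ?_⟩
  have htsum : ∑' s, α s * ((k * b s + d : ℕ) : ENNReal) = k * ∑' s, α s * b s + d := by
    calc ∑' s, α s * ((k * b s + d : ℕ) : ENNReal) = ∑' s, (k * (α s * b s) + α s * d) :=
          tsum_congr fun s => by push_cast; ring
      _ = k * ∑' s, α s * b s + d := by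
          rw [ENNReal.tsum_add, ENNReal.tsum_mul_left, ENNReal.tsum_mul_right, hα, one_mul]
  rw [htsum]
  exact ENNReal.add_ne_top.2
    ⟨ENNReal.mul_ne_top (ENNReal.natCast_ne_top k) hb, ENNReal.natCast_ne_top d⟩

end Triviality

/-- every strongly C-trivial measure is strongly K-trivial. -/
theorem stronglyC_trivial_implies_stronglyK_trivial
    (U UK : BStr →. BStr) (hU : UniversalPlain U) (hUK : UniversalPrefixFree UK)
    (μ : Measure Cantor) [IsProbabilityMeasure μ]
    (hC : StronglyTrivial U μ) :
    StronglyTrivial UK μ := by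
  obtain ⟨d, hd⟩ := exists_trivialVia_prefixFree hU hUK
  exact hC.of_affine hd
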